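/- For every even positive integer k and every n ≥ 1, the polynomial in the 2n indeterminates x₁, x₂ ∈ ℝⁿ given by 2^k·(‖x₁‖²)^{k/2} + 2^k·(‖x₂‖²)^{k/2} − (‖x₁ + x₂‖²)^{k/2} is a sum of squares of polynomials; in other words, the inequality ‖x₁ + x₂‖^k ≤ 2^k·‖x₁‖^k + 2^k·‖x₂‖^k admits a degree-k sum-of-squares proof. -/

import Mathlib

open scoped BigOperators
open MvPolynomial

noncomputable section

/-- A polynomial is a sum of squares. -/
def IsSOS {V : Type*} (p : MvPolynomial V ℝ) : Prop :=
  ∃ (N : ℕ) (q : Fin N → MvPolynomial V ℝ), p = ∑ j, q j ^ 2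

/-- A degree-`k` sum-of-squares proof that the system `{A i ≥ 0}` implies `g ≥ 0`:
a family of sos polynomials `P S`, indexed by the subsets `S` of the constraint
indices, with `g = ∑_S P S · ∏_{i∈S} A i` and every summand of degree at most `k`. -/
def SosProof {V ι : Type*} [Fintype ι] [DecidableEq ι]
    (A : ι → MvPolynomial V ℝ) (k : ℕ) (g : MvPolynomial V ℝ) : Prop :=
  ∃ P : Finset ι → MvPolynomial V ℝ,
    (∀ S, IsSOS (P S)) ∧
    g = ∑ S : Finset ι, P S * ∏ i ∈ S, A i ∧
    ∀ S : Finset ι, (P S * ∏ i ∈ S, A i).totalDegree ≤ k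

/-- Pseudo-expectation of `f` under the finitely supported `μ`. -/
def pExpect {V : Type*} (μ : (V → ℝ) →₀ ℝ) (f : (V → ℝ) → ℝ) : ℝ :=
  ∑ z ∈ μ.support, μ z * f z

/-- `μ` is a pseudo-distribution of level `ℓ`: finitely supported, total mass one,
and nonnegative pseudo-expectation on every square of a polynomial of degree `≤ ℓ/2`. -/
def IsPseudoDist {V : Type*} (μ : (V → ℝ) →₀ ℝ) (ℓ : ℕ) : Prop :=
  (∑ z ∈ μ.support, μ z) = 1 ∧
  ∀ p : MvPolynomial V ℝ, p.totalDegree ≤ ℓ / 2 →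
    0 ≤ pExpect μ fun z => MvPolynomial.eval z p ^ 2

/-- A level-`ℓ` pseudo-distribution `μ` satisfies the system `{A i ≥ 0}` at degree `k`. -/
def PDSatisfies {V ι : Type*} [Fintype ι] [DecidableEq ι]
    (μ : (V → ℝ) →₀ ℝ) (ℓ : ℕ) (A : ι → MvPolynomial V ℝ) (k : ℕ) : Prop :=
  ∀ (S : Finset ι) (h : MvPolynomial V ℝ), IsSOS h →
    h.totalDegree + ∑ i ∈ S, max (A i).totalDegree k ≤ ℓ →
    0 ≤ pExpect μ fun z => MvPolynomial.eval z (h * ∏ i ∈ S, A i)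

theorem isSOS_of_isSumSq {V : Type*} {p : MvPolynomial V ℝ} (h : IsSumSq p) : IsSOS p := by
  induction h with
  | zero => exact ⟨0, fun _ => 0, by simp⟩
  | sq_add a _ ih =>
    obtain ⟨N, q, rfl⟩ := ih
    exact ⟨N + 1, Fin.cons a q, by simp [Fin.sum_univ_succ, sq]⟩

theorem isSumSq_sum_aux {R ι : Type*} [CommRing R] (s : Finset ι) (f : ι → R)
    (h : ∀ i ∈ s, IsSumSq (f i)) : IsSumSq (∑ i ∈ s, f i) := by
  classical
  induction s using Finset.induction_on with
  | empty => simp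
  | insert a s ha ih =>
    rw [Finset.sum_insert ha]
    exact (h a (by simp)).add (ih fun i hi => h i (by simp [hi]))

theorem isSumSq_sq_aux {R : Type*} [CommRing R] (a : R) : IsSumSq (a ^ 2) := by
  rw [sq]; exact IsSumSq.mul_self a

theorem isSumSq_pow_aux {R : Type*} [CommRing R] {a : R} (h : IsSumSq a) (m : ℕ) :
    IsSumSq (a ^ m) := by
  induction m with
  | zero => simpa using isSumSq_sq_aux (1 : R)
  | succ m ih => rw [pow_succ]; exact ih.mul h

theorem isSumSq_add_pow_sub {R : Type*} [CommRing R] {c d : R} (hc : IsSumSq c)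
    (hd : IsSumSq d) (m : ℕ) : IsSumSq ((c + d) ^ m - c ^ m) := by
  induction m with
  | zero => simp
  | succ m ih =>
    have : (c + d) ^ (m + 1) - c ^ (m + 1) = ((c + d) ^ m - c ^ m) * (c + d) + c ^ m * d := by
      ring
    rw [this]
    exact (ih.mul (hc.add hd)).add ((isSumSq_pow_aux hc m).mul hd)

theorem isSumSq_power_mean {R : Type*} [CommRing R] {a b : R} (ha : IsSumSq a)
    (hb : IsSumSq b) (m : ℕ) : IsSumSq (2 ^ m * (a ^ m + b ^ m) - (a + b) ^ m) := by
  have h2 : IsSumSq (2 : R) := by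
    have := (isSumSq_sq_aux (1 : R)).add (isSumSq_sq_aux (1 : R))
    rwa [one_pow, one_add_one_eq_two] at this
  induction m with
  | zero =>
    have := isSumSq_sq_aux (1 : R)
    convert this using 1
    ring
  | succ m ih =>
    have hg := (Commute.all a b).geom_sum₂_mul m
    have : 2 ^ (m + 1) * (a ^ (m + 1) + b ^ (m + 1)) - (a + b) ^ (m + 1)
        = (2 ^ m * (a ^ m + b ^ m) - (a + b) ^ m) * (a + b) +
          2 ^ m * ((a - b) ^ 2 * ∑ i ∈ Finset.range m, a ^ i * b ^ (m - 1 - i)) := by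
      linear_combination (-2 ^ m * (a - b)) * hg
    rw [this]
    refine (ih.mul (ha.add hb)).add ((isSumSq_pow_aux h2 m).mul
      ((isSumSq_sq_aux _).mul (isSumSq_sum_aux _ _ fun i _ => ?_)))
    exact (isSumSq_pow_aux ha _).mul (isSumSq_pow_aux hb _)

/-- Sos generalized triangle inequality with norms: for even `k > 0`,
`2^k·‖x₁‖^k + 2^k·‖x₂‖^k − ‖x₁ + x₂‖^k` is a sum of squares (in the `2n`
indeterminates `x₁, x₂ ∈ ℝⁿ`, with `‖x‖^k = (‖x‖²)^{k/2}`). -/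
theorem sos_triangle_norm (k n : ℕ) (hk : 0 < k) (hke : Even k) (hn : 1 ≤ n) :
    IsSOS
      (C ((2 : ℝ) ^ k) *
          (∑ j, (X (Sum.inl j) : MvPolynomial (Fin n ⊕ Fin n) ℝ) ^ 2) ^ (k / 2) +
        C ((2 : ℝ) ^ k) *
          (∑ j, (X (Sum.inr j) : MvPolynomial (Fin n ⊕ Fin n) ℝ) ^ 2) ^ (k / 2) -
        (∑ j, ((X (Sum.inl j) : MvPolynomial (Fin n ⊕ Fin n) ℝ) + X (Sum.inr j)) ^ 2) ^
          (k / 2)) := by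
  obtain ⟨m, rfl⟩ := hke
  rw [show (m + m) / 2 = m by omega]
  apply isSOS_of_isSumSq
  have hC : (C ((2 : ℝ) ^ (m + m)) : MvPolynomial (Fin n ⊕ Fin n) ℝ) = 2 ^ m * 2 ^ m := by
    rw [pow_add, C_mul, C_pow, show (C (2 : ℝ) : MvPolynomial (Fin n ⊕ Fin n) ℝ) = 2 from map_ofNat C 2]
  rw [hC]
  set a := ∑ j, (X (Sum.inl j) : MvPolynomial (Fin n ⊕ Fin n) ℝ) ^ 2 with ha
  set b := ∑ j, (X (Sum.inr j) : MvPolynomial (Fin n ⊕ Fin n) ℝ) ^ 2 with hb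
  set c := ∑ j, ((X (Sum.inl j) : MvPolynomial (Fin n ⊕ Fin n) ℝ) + X (Sum.inr j)) ^ 2 with hc
  set d := ∑ j, ((X (Sum.inl j) : MvPolynomial (Fin n ⊕ Fin n) ℝ) - X (Sum.inr j)) ^ 2 with hd
  have sa : IsSumSq a := isSumSq_sum_aux _ _ fun i _ => isSumSq_sq_aux _
  have sb : IsSumSq b := isSumSq_sum_aux _ _ fun i _ => isSumSq_sq_aux _
  have sc : IsSumSq c := isSumSq_sum_aux _ _ fun i _ => isSumSq_sq_aux _
  have sd : IsSumSq d := isSumSq_sum_aux _ _ fun i _ => isSumSq_sq_aux _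
  have hcd : c + d = 2 * (a + b) := by
    rw [ha, hb, hc, hd, ← Finset.sum_add_distrib, ← Finset.sum_add_distrib, Finset.mul_sum]
    exact Finset.sum_congr rfl fun i _ => by ring
  have h2 : IsSumSq (2 : MvPolynomial (Fin n ⊕ Fin n) ℝ) := by
    have := (isSumSq_sq_aux (1 : MvPolynomial (Fin n ⊕ Fin n) ℝ)).add (isSumSq_sq_aux 1)
    rwa [one_pow, one_add_one_eq_two] at this
  have key := ((isSumSq_pow_aux h2 m).mul (isSumSq_power_mean sa sb m)).add
    (isSumSq_add_pow_sub sc sd m)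
  rw [hcd, mul_pow] at key
  have e : 2 ^ m * 2 ^ m * a ^ m + 2 ^ m * 2 ^ m * b ^ m - c ^ m =
      2 ^ m * (2 ^ m * (a ^ m + b ^ m) - (a + b) ^ m) + (2 ^ m * (a + b) ^ m - c ^ m) := by
    ring
  rw [e]
  exact key
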